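/- arXiv:2108.09513 — 6 statements merged into one kernel-verified Lean document; each statement's English description precedes it below -/
import Mathlib

section
/- Let d be a natural number and Θ ∈ ℝ^d. Define P : ℝ → ℝ by P(g) = Σ_{i=1}^d clip(g·Θ_i − 1/2), where clip(x) = min(max(x, 0), 1). For all real numbers g₁, g₂ with 0 < g₁ < g₂, one has P(g₁) = P(g₂) if and only if for every index i with Θ_i > 0, either g₂·Θ_i ≤ 1/2 or g₁·Θ_i ≥ 3/2. -/
/-- `clip x = min (max x 0) 1` clips a real number into `[0,1]`. -/
noncomputable def clip (x : ℝ) : ℝ := min (max x 0) 1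

/-- Characterization of the equality case in the monotonicity of
`g ↦ ∑ i, clip (g * Θ i - 1/2)`. -/
theorem clip_sum_eq_iff (d : ℕ) (Θ : Fin d → ℝ) (g₁ g₂ : ℝ)
    (hg₁ : 0 < g₁) (hlt : g₁ < g₂) :
    (∑ i, clip (g₁ * Θ i - 1/2)) = (∑ i, clip (g₂ * Θ i - 1/2)) ↔
      ∀ i, 0 < Θ i → g₂ * Θ i ≤ 1/2 ∨ 3/2 ≤ g₁ * Θ i := by
  have key : ∀ t : ℝ, clip (g₁ * t - 1/2) ≤ clip (g₂ * t - 1/2) ∧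
      (clip (g₁ * t - 1/2) = clip (g₂ * t - 1/2) ↔
        (0 < t → g₂ * t ≤ 1/2 ∨ 3/2 ≤ g₁ * t)) := by
    intro t
    rcases lt_or_ge 0 t with ht | ht
    · have h : g₁ * t < g₂ * t := mul_lt_mul_of_pos_right hlt ht
      generalize g₁ * t = a at *
      generalize g₂ * t = b at *
      unfold clip
      grind
    · have h1 : g₁ * t ≤ 0 := mul_nonpos_of_nonneg_of_nonpos hg₁.le ht
      have h2 : g₂ * t ≤ 0 := mul_nonpos_of_nonneg_of_nonpos (hg₁.trans hlt).le ht
      generalize g₁ * t = a at *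
      generalize g₂ * t = b at *
      unfold clip
      grind
  rw [Finset.sum_eq_sum_iff_of_le (fun i _ => (key (Θ i)).1)]
  simp only [Finset.mem_univ, true_implies]
  exact forall_congr' fun i => (key (Θ i)).2
end

section
/- Let d be a natural number and Θ ∈ ℝ^d, and define P(g) = Σ_{i=1}^d clip(g·Θ_i − 1/2), where clip(x) = min(max(x, 0), 1). Suppose g* > 0 is such that there exists an index i with 1/2 < g*·Θ_i < 3/2. Then g* is the unique positive real attaining the value P(g*): for every g > 0 with P(g) = P(g*), one has g = g*. -/
theorem clip_mono_aux {x y : ℝ} (h : x ≤ y) : clip x ≤ clip y :=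
  min_le_min_right _ (max_le_max_right _ h)

theorem clip_ray_mono {a b : ℝ} (t : ℝ) (ha : 0 < a) (hab : a < b) :
    clip (a * t - 1/2) ≤ clip (b * t - 1/2) := by
  rcases le_total 0 t with ht | ht
  · exact clip_mono_aux (by nlinarith)
  · have h1 : a * t ≤ 0 := by nlinarith
    have h2 : b * t ≤ 0 := by nlinarith
    unfold clip
    rw [max_eq_right (by linarith), max_eq_right (by linarith)]

theorem clip_strict_left {x y : ℝ} (h : x < y) (h0 : 0 < x) (h1 : x < 1) :
    clip x < clip y := by
  unfold clip
  rw [max_eq_left h0.le, max_eq_left (h0.trans h).le, min_eq_left h1.le]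
  exact lt_min h h1

theorem clip_strict_right {x y : ℝ} (h : x < y) (h0 : 0 < y) (h1 : y < 1) :
    clip x < clip y := by
  unfold clip
  rw [max_eq_left h0.le, min_eq_left h1.le]
  exact (min_le_left _ _).trans_lt (max_lt h h0)

/-- Uniqueness part of Theorem 4.2: if at `g* > 0` some coordinate of `g* • Θ - 0.5`
lies strictly between `0` and `1`, then `g*` is the unique positive real attaining the
value `∑ i, clip (g* * Θ i - 1/2)`. -/
theorem clip_sum_unique (d : ℕ) (Θ : Fin d → ℝ) (gstar : ℝ) (hg : 0 < gstar)
    (hi : ∃ i, 1/2 < gstar * Θ i ∧ gstar * Θ i < 3/2) :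
    ∀ g : ℝ, 0 < g →
      (∑ i, clip (g * Θ i - 1/2)) = (∑ i, clip (gstar * Θ i - 1/2)) → g = gstar := by
  obtain ⟨i, h1, h2⟩ := hi
  intro g hg0 heq
  have ht : 0 < Θ i := by
    by_contra hc
    nlinarith
  rcases lt_trichotomy g gstar with h | h | h
  · have hm := mul_lt_mul_of_pos_right h ht
    exact absurd heq (ne_of_lt (Finset.sum_lt_sum (fun j _ => clip_ray_mono (Θ j) hg0 h)
      ⟨i, Finset.mem_univ i, clip_strict_right (by linarith) (by linarith) (by linarith)⟩))
  · exact h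
  · have hm := mul_lt_mul_of_pos_right h ht
    exact absurd heq.symm (ne_of_lt (Finset.sum_lt_sum (fun j _ => clip_ray_mono (Θ j) hg h)
      ⟨i, Finset.mem_univ i, clip_strict_left (by linarith) (by linarith) (by linarith)⟩))
end

section
/- Let t and κ be real numbers with t ≥ 1 and κ ≥ 1, and set N = t·κ² and d = t·κ. Then 2^{N(N−1)/2} ≥ (1/(2κ²)) · 2^{t²(κ⁴−3κ²)/2} · ( κ · 2^{d(d−1)/2} + (κ(κ−1)/2) · 2^{d²} ). -/
/-- Quantitative search-space reduction of coarse-grained searching (Theorem 4.1):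
with `N = t κ²` and `d = t κ`, the full search space `2 ^ (N(N-1)/2)` exceeds
`(1/(2κ²)) · 2 ^ (t²(κ⁴ - 3κ²)/2)` times the coarse-grained search space
`κ · 2 ^ (d(d-1)/2) + (κ(κ-1)/2) · 2 ^ (d²)`. -/
theorem coarse_grained_search_reduction (t κ : ℝ) (ht : 1 ≤ t) (hκ : 1 ≤ κ)
    (N d : ℝ) (hN : N = t * κ ^ 2) (hd : d = t * κ) :
    (2 : ℝ) ^ (N * (N - 1) / 2) ≥
      (1 / (2 * κ ^ 2)) * (2 : ℝ) ^ (t ^ 2 * (κ ^ 4 - 3 * κ ^ 2) / 2) *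
        (κ * (2 : ℝ) ^ (d * (d - 1) / 2) + (κ * (κ - 1) / 2) * (2 : ℝ) ^ (d ^ 2)) := by
  have hd1 : 1 ≤ d := by rw [hd]; nlinarith
  have h1 : (2 : ℝ) ^ (d * (d - 1) / 2) ≤ (2 : ℝ) ^ (d ^ 2) :=
    Real.rpow_le_rpow_of_exponent_le (by norm_num) (by nlinarith)
  have h2 : (2 : ℝ) ^ (t ^ 2 * (κ ^ 4 - 3 * κ ^ 2) / 2) * (2 : ℝ) ^ (d ^ 2)
      ≤ (2 : ℝ) ^ (N * (N - 1) / 2) := by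
    rw [← Real.rpow_add (by norm_num)]
    apply Real.rpow_le_rpow_of_exponent_le (by norm_num)
    subst hN hd
    have : 0 ≤ (t * (t - 1)) * κ ^ 2 :=
      mul_nonneg (mul_nonneg (by linarith) (by linarith)) (sq_nonneg κ)
    nlinarith
  have hA : 0 < (2 : ℝ) ^ (t ^ 2 * (κ ^ 4 - 3 * κ ^ 2) / 2) := by positivity
  have hB : 0 < (2 : ℝ) ^ (d ^ 2) := by positivity
  have h3 : κ * (2 : ℝ) ^ (d * (d - 1) / 2) + (κ * (κ - 1) / 2) * (2 : ℝ) ^ (d ^ 2)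
      ≤ 2 * κ ^ 2 * (2 : ℝ) ^ (d ^ 2) := by
    have h4 : κ * (2 : ℝ) ^ (d * (d - 1) / 2) ≤ κ * (2 : ℝ) ^ (d ^ 2) :=
      mul_le_mul_of_nonneg_left h1 (by linarith)
    have h5 : (κ + κ * (κ - 1) / 2) * (2 : ℝ) ^ (d ^ 2) ≤ 2 * κ ^ 2 * (2 : ℝ) ^ (d ^ 2) :=
      mul_le_mul_of_nonneg_right (by nlinarith) hB.le
    linarith
  have hk : 0 < κ := by linarith
  refine ge_iff_le.mpr (le_trans (mul_le_mul_of_nonneg_left h3 (by positivity)) ?_)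
  refine le_trans (le_of_eq ?_) h2
  field_simp
end

section
/- Let t and κ be real numbers with t ≥ 1 and κ ≥ 3, and set N = t·κ² and d = t·κ. Then 2^{N(N−1)/2} ≥ 2^{t²κ⁴/4} · ( κ · 2^{d(d−1)/2} + (κ(κ−1)/2) · 2^{d²} ). -/
/-- Headline asymptotic of Theorem 4.1: for `κ ≥ 3`, with `N = t κ²` and `d = t κ`,
the full search space `2 ^ (N(N-1)/2)` is at least `2 ^ (t²κ⁴/4)` times the
coarse-grained search space `κ · 2 ^ (d(d-1)/2) + (κ(κ-1)/2) · 2 ^ (d²)`. -/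
theorem coarse_grained_search_reduction_asymptotic (t κ : ℝ) (ht : 1 ≤ t) (hκ : 3 ≤ κ)
    (N d : ℝ) (hN : N = t * κ ^ 2) (hd : d = t * κ) :
    (2 : ℝ) ^ (N * (N - 1) / 2) ≥
      (2 : ℝ) ^ (t ^ 2 * κ ^ 4 / 4) *
        (κ * (2 : ℝ) ^ (d * (d - 1) / 2) + (κ * (κ - 1) / 2) * (2 : ℝ) ^ (d ^ 2)) := by
  have hd3 : 3 ≤ d := by rw [hd]; nlinarith
  have h1 : (2 : ℝ) ^ (d * (d - 1) / 2) ≤ (2 : ℝ) ^ (d ^ 2) :=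
    Real.rpow_le_rpow_of_exponent_le (by norm_num) (by nlinarith)
  have h2 : κ ≤ (2 : ℝ) ^ κ := by
    have h := one_add_mul_self_le_rpow_one_add (s := (1 : ℝ)) (by norm_num)
      (p := κ) (by linarith)
    norm_num at h
    linarith
  have h3 : κ * (κ + 1) / 2 ≤ (2 : ℝ) ^ (2 * κ) := by
    rw [two_mul, Real.rpow_add (by norm_num)]
    have := mul_le_mul h2 h2 (by linarith) (by positivity)
    nlinarith
  have hE : t ^ 2 * κ ^ 4 / 4 + (2 * κ + d ^ 2) ≤ N * (N - 1) / 2 := by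
    have hk2 : 9 ≤ κ ^ 2 := by nlinarith
    have ha : t * (κ ^ 2 * (κ ^ 2 / 4 - 1)) ≤ t ^ 2 * (κ ^ 2 * (κ ^ 2 / 4 - 1)) :=
      mul_le_mul_of_nonneg_right (by nlinarith)
        (mul_nonneg (by positivity) (by linarith))
    have hb : κ ^ 2 * (3 / 4) ≤ κ ^ 2 * (κ ^ 2 / 4 - 3 / 2) :=
      mul_le_mul_of_nonneg_left (by linarith) (by positivity)
    have hc : 1 * (κ ^ 2 * (κ ^ 2 / 4 - 3 / 2)) ≤ t * (κ ^ 2 * (κ ^ 2 / 4 - 3 / 2)) :=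
      mul_le_mul_of_nonneg_right ht (mul_nonneg (by positivity) (by linarith))
    have hf : 2 * κ ≤ κ ^ 2 * (3 / 4) := by nlinarith
    rw [hN, hd]
    nlinarith
  have hP : (0 : ℝ) < (2 : ℝ) ^ (d ^ 2) := by positivity
  calc _ ≤ (2 : ℝ) ^ (t ^ 2 * κ ^ 4 / 4) * ((2 : ℝ) ^ (2 * κ) * (2 : ℝ) ^ (d ^ 2)) := by
        apply mul_le_mul_of_nonneg_left _ (by positivity)
        have ha := mul_le_mul_of_nonneg_left h1 (by linarith : 0 ≤ κ)
        have hb := mul_le_mul_of_nonneg_right h3 hP.le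
        linarith
    _ = (2 : ℝ) ^ (t ^ 2 * κ ^ 4 / 4 + (2 * κ + d ^ 2)) := by
        rw [← Real.rpow_add (by norm_num), ← Real.rpow_add (by norm_num)]
    _ ≤ _ := Real.rpow_le_rpow_of_exponent_le (by norm_num) hE
end

section
/- Let d ≥ 1 be a natural number and let p : ℝ^d → ℝ be differentiable with L-Lipschitz gradient, i.e., ‖∇p(x) − ∇p(y)‖₂ ≤ L‖x − y‖₂ for all x, y ∈ ℝ^d. Let Θ ∈ ℝ^d, let η > 0, and let s ∈ ℝ^d have s_l ∈ {−1, 1} for every coordinate l. Then p(Θ − η·s) ≤ p(Θ) − η · Σ_{l=1}^d |(∇p(Θ))_l| + 2η · Σ_{l : s_l·(∇p(Θ))_l ≤ 0} |(∇p(Θ))_l| + (L·d/2)·η². -/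
/-- Deterministic one-step descent inequality for a signSGD update (from the proof of
Theorem 4.3): if `p : ℝ^d → ℝ` is differentiable with `L`-Lipschitz gradient,
`η > 0`, and `s ∈ {-1, 1}^d`, then
`p(Θ - η s) ≤ p(Θ) - η ‖∇p(Θ)‖₁ + 2η ∑_{l : s_l (∇p(Θ))_l ≤ 0} |(∇p(Θ))_l| + (Ld/2) η²`. -/
theorem signSGD_descent_step (d : ℕ) (hd : 1 ≤ d)
    (p : EuclideanSpace ℝ (Fin d) → ℝ) (L : ℝ)
    (hdiff : Differentiable ℝ p)
    (hlip : ∀ x y, ‖gradient p x - gradient p y‖ ≤ L * ‖x - y‖)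
    (Θ s : EuclideanSpace ℝ (Fin d)) (η : ℝ) (hη : 0 < η)
    (hs : ∀ l, s l = -1 ∨ s l = 1) :
    p (Θ - η • s) ≤
      p Θ - η * (∑ l, |gradient p Θ l|)
        + 2 * η * ∑ l ∈ Finset.univ.filter
            (fun l => s l * gradient p Θ l ≤ 0), |gradient p Θ l|
        + (L * d / 2) * η ^ 2 := by
  have hs2 : ‖s‖ ^ 2 = (d : ℝ) := by
    rw [EuclideanSpace.norm_sq_eq]
    have : ∀ l, ‖s l‖ ^ 2 = (1 : ℝ) := by
      intro l
      rcases hs l with h | h <;> simp [h]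
    rw [Finset.sum_congr rfl fun l _ => this l]
    simp
  have hf : ∀ t : ℝ, HasDerivAt (fun t : ℝ => p (Θ - t • s))
      (-(inner ℝ (gradient p (Θ - t • s)) s)) t := by
    intro t
    have h1 : HasDerivAt (fun t : ℝ => Θ - t • s) (-s) t := by
      have := ((hasDerivAt_id t).smul_const s).const_sub Θ
      simpa using this
    have h2 := (hdiff (Θ - t • s)).hasGradientAt.hasFDerivAt
    have h3 := h2.comp_hasDerivAt t h1
    refine HasDerivAt.congr_deriv (f := fun t : ℝ => p (Θ - t • s)) h3 ?_
    simp
  have hB : ∀ t : ℝ, HasDerivAt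
      (fun t : ℝ => p Θ - t * inner ℝ (gradient p Θ) s + (L * d / 2) * t ^ 2)
      (-(inner ℝ (gradient p Θ) s) + L * d * t) t := by
    intro t
    have h1 := (((hasDerivAt_id t).mul_const (inner ℝ (gradient p Θ) s)).const_sub (p Θ)).add
      (((hasDerivAt_id t).pow 2).const_mul (L * d / 2))
    refine h1.congr_deriv ?_
    simp
    ring
  have key := image_le_of_deriv_right_le_deriv_boundary (a := 0) (b := η)
    (fun t _ => (hf t).continuousAt.continuousWithinAt)
    (fun t _ => (hf t).hasDerivWithinAt) (by simp)
    (fun t _ => (hB t).continuousAt.continuousWithinAt)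
    (fun t _ => (hB t).hasDerivWithinAt)
    (by
      intro t ht
      have h1 := real_inner_le_norm (gradient p Θ - gradient p (Θ - t • s)) s
      rw [inner_sub_left] at h1
      have h2 := hlip Θ (Θ - t • s)
      rw [sub_sub_cancel, norm_smul, Real.norm_of_nonneg ht.1] at h2
      have h3 := mul_le_mul_of_nonneg_right h2 (norm_nonneg s)
      have h4 : L * (t * ‖s‖) * ‖s‖ = L * d * t := by rw [← hs2]; ring
      linarith)
    (Set.right_mem_Icc.2 hη.le)
  have hin : inner ℝ (gradient p Θ) s = (∑ l, |gradient p Θ l|)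
      - 2 * ∑ l ∈ Finset.univ.filter
            (fun l => s l * gradient p Θ l ≤ 0), |gradient p Θ l| := by
    rw [PiLp.inner_apply, Finset.sum_filter, Finset.mul_sum, ← Finset.sum_sub_distrib]
    refine Finset.sum_congr rfl fun l _ => ?_
    have e : inner ℝ (gradient p Θ l) (s l) = s l * gradient p Θ l := by
      simp
    rw [e]
    rcases hs l with h | h <;> rw [h] <;> split_ifs with h0
    · rw [abs_of_nonneg (by linarith)]; ring
    · rw [abs_of_neg (by linarith)]; ring
    · rw [abs_of_nonpos (by linarith)]; ring
    · rw [abs_of_pos (by linarith)]; ring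
  simp only [hin] at key
  linarith
end

section
/- Let d ≥ 1 be a natural number and let p : ℝ^d → ℝ be differentiable with L-Lipschitz gradient, i.e., ‖∇p(x) − ∇p(y)‖₂ ≤ L‖x − y‖₂ for all x, y ∈ ℝ^d. Let (Ω, 𝔽, ℙ) be a probability space, let ĝ : Ω → ℝ^d be a measurable random vector, let Θ ∈ ℝ^d, and let η > 0. Define sgn : ℝ → ℝ by sgn(x) = 1 if x ≥ 0 and sgn(x) = −1 if x < 0, applied coordinatewise. Then E[ p(Θ − η · sgn(ĝ)) ] ≤ p(Θ) − η · Σ_{l=1}^d |(∇p(Θ))_l| + (L·d/2)·η² + 2η · Σ_{l=1}^d |(∇p(Θ))_l| · ℙ[ sgn(ĝ_l) ≠ sgn((∇p(Θ))_l) ]. -/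
open MeasureTheory
open scoped ProbabilityTheory

/-- The sign function `sgn(x) = 1` if `x ≥ 0` and `-1` otherwise. -/
noncomputable def sgn (x : ℝ) : ℝ := if 0 ≤ x then 1 else -1

theorem descent_aux {d : ℕ} (p : EuclideanSpace ℝ (Fin d) → ℝ) (L : ℝ)
    (hdiff : Differentiable ℝ p)
    (hlip : ∀ x y, ‖gradient p x - gradient p y‖ ≤ L * ‖x - y‖)
    (x v : EuclideanSpace ℝ (Fin d)) :
    p (x + v) ≤ p x + inner ℝ (gradient p x) v + L / 2 * ‖v‖ ^ 2 := by
  have hf : ∀ t : ℝ, HasDerivAt (fun t : ℝ => p (x + t • v))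
      (inner ℝ (gradient p (x + t • v)) v) t := by
    intro t
    have h1 : HasDerivAt (fun t : ℝ => x + t • v) v t := by
      simpa using ((hasDerivAt_id t).smul_const v).const_add x
    have h2 := (hdiff (x + t • v)).hasGradientAt.hasFDerivAt
    exact h2.comp_hasDerivAt t h1
  have hB : ∀ t : ℝ, HasDerivAt
      (fun t : ℝ => p x + t * inner ℝ (gradient p x) v + L / 2 * ‖v‖ ^ 2 * t ^ 2)
      (inner ℝ (gradient p x) v + L * t * ‖v‖ ^ 2) t := by
    intro t
    have := (((hasDerivAt_id t).mul_const (inner ℝ (gradient p x) v)).const_add (p x)).add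
      (((hasDerivAt_id t).pow 2).const_mul (L / 2 * ‖v‖ ^ 2))
    refine this.congr_deriv ?_
    simp
    ring
  have := image_le_of_deriv_right_le_deriv_boundary (a := 0) (b := 1)
    (fun t _ => (hf t).continuousAt.continuousWithinAt)
    (fun t _ => (hf t).hasDerivWithinAt) (by simp)
    (fun t _ => (hB t).continuousAt.continuousWithinAt)
    (fun t _ => (hB t).hasDerivWithinAt)
    (by
      intro t ht
      have h1 : inner ℝ (gradient p (x + t • v) - gradient p x) v ≤ L * t * ‖v‖ ^ 2 := by
        refine (real_inner_le_norm _ _).trans ?_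
        have h2 := hlip (x + t • v) x
        rw [add_sub_cancel_left, norm_smul, Real.norm_of_nonneg ht.1] at h2
        calc _ ≤ (L * (t * ‖v‖)) * ‖v‖ := by gcongr
          _ = _ := by ring
      rw [inner_sub_left] at h1
      linarith) (x := 1) (by simp)
  simpa using this

theorem sgn_abs (x : ℝ) : |sgn x| = 1 := by
  unfold sgn; split_ifs <;> simp

theorem sgn_meas : Measurable sgn :=
  Measurable.ite measurableSet_Ici measurable_const measurable_const

theorem sgn_aux (g s : ℝ) :
    -(g * sgn s) = -|g| + 2 * (|g| * (if sgn s ≠ sgn g then 1 else 0)) := by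
  unfold sgn
  rcases le_or_gt 0 s with h | h <;> rcases le_or_gt 0 g with h' | h'
  · simp [h, h', abs_of_nonneg h']
  · norm_num [h, h'.not_ge, abs_of_neg h']; ring
  · norm_num [h.not_ge, h', abs_of_nonneg h']; ring
  · simp [h.not_ge, h'.not_ge, abs_of_neg h']

/-- Expected per-iteration descent bound for signSGD with a random gradient estimate
(from the proof of Theorem 4.3): if `p : ℝ^d → ℝ` is differentiable with `L`-Lipschitz
gradient, `ĝ` is a measurable random vector, and `η > 0`, then
`E[p(Θ - η sgn(ĝ))] ≤ p(Θ) - η ‖∇p(Θ)‖₁ + (Ld/2) η²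
  + 2η ∑ l |(∇p(Θ))_l| · ℙ[sgn(ĝ_l) ≠ sgn((∇p(Θ))_l)]`. -/
theorem signSGD_expected_descent_step (d : ℕ) (hd : 1 ≤ d)
    (p : EuclideanSpace ℝ (Fin d) → ℝ) (L : ℝ)
    (hdiff : Differentiable ℝ p)
    (hlip : ∀ x y, ‖gradient p x - gradient p y‖ ≤ L * ‖x - y‖)
    {Ω : Type*} [MeasureSpace Ω] [IsProbabilityMeasure (ℙ : Measure Ω)]
    (ghat : Ω → EuclideanSpace ℝ (Fin d)) (hghat : Measurable ghat)
    (Θ : EuclideanSpace ℝ (Fin d)) (η : ℝ) (hη : 0 < η) :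
    (∫ ω, p (Θ - η • (WithLp.equiv 2 (Fin d → ℝ)).symm (fun l => sgn (ghat ω l)))) ≤
      p Θ - η * (∑ l, |gradient p Θ l|) + (L * d / 2) * η ^ 2
        + 2 * η * ∑ l, |gradient p Θ l| *
            (ℙ {ω | sgn (ghat ω l) ≠ sgn (gradient p Θ l)}).toReal := by
  classical
  set G := gradient p Θ with hG
  set S : Ω → EuclideanSpace ℝ (Fin d) :=
    fun ω => (WithLp.equiv 2 (Fin d → ℝ)).symm (fun l => sgn (ghat ω l)) with hS
  have hSl : ∀ ω l, S ω l = sgn (ghat ω l) := fun ω l => rfl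
  have hml : ∀ l, Measurable fun ω => sgn (ghat ω l) := fun l =>
    sgn_meas.comp ((EuclideanSpace.proj (𝕜 := ℝ) l).continuous.measurable.comp hghat)
  have hSm : Measurable S :=
    (PiLp.continuous_toLp 2 (fun _ : Fin d => ℝ)).measurable.comp (measurable_pi_lambda _ hml)
  have hSn : ∀ ω, ‖S ω‖ ^ 2 = d := by
    intro ω
    rw [EuclideanSpace.norm_sq_eq]
    simp [hSl, sgn_abs]
  have hms : ∀ l, MeasurableSet {ω | sgn (ghat ω l) ≠ sgn (G l)} := fun l =>
    (hml l) (measurableSet_singleton _).compl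
  have hcont := hdiff.continuous
  have hint : Integrable (fun ω => p (Θ - η • S ω)) := by
    obtain ⟨C, hC⟩ := (isCompact_closedBall Θ (η * √d)).exists_bound_of_continuousOn
      hcont.continuousOn
    refine Integrable.of_bound (hcont.measurable.comp
      (measurable_const.sub (hSm.const_smul η))).aestronglyMeasurable C (ae_of_all _ fun ω => ?_)
    apply hC
    rw [mem_closedBall_iff_norm, sub_sub_cancel_left, norm_neg, norm_smul,
      Real.norm_of_nonneg hη.le, ← hSn ω, Real.sqrt_sq (norm_nonneg _)]
  have hpt : ∀ ω, p (Θ - η • S ω) ≤ (p Θ - η * (∑ l, |G l|) + (L * d / 2) * η ^ 2)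
      + 2 * η * ∑ l, |G l| * {ω | sgn (ghat ω l) ≠ sgn (G l)}.indicator (fun _ => (1:ℝ)) ω := by
    intro ω
    have h := descent_aux p L hdiff hlip Θ (-(η • S ω))
    rw [← sub_eq_add_neg, norm_neg, norm_smul, mul_pow, hSn, inner_neg_right, inner_smul_right,
      Real.norm_of_nonneg hη.le, ← hG] at h
    have h2 : -inner ℝ G (S ω) = -∑ l, |G l| + 2 * ∑ l, |G l| *
        {ω | sgn (ghat ω l) ≠ sgn (G l)}.indicator (fun _ => (1:ℝ)) ω := by
      rw [PiLp.inner_apply, Finset.mul_sum, ← Finset.sum_neg_distrib, ← Finset.sum_neg_distrib,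
        ← Finset.sum_add_distrib]
      refine Finset.sum_congr rfl fun l _ => ?_
      rw [hSl, Set.indicator_apply]
      refine Eq.trans ?_ ((sgn_aux (G l) (ghat ω l)).trans ?_)
      · simp [mul_comm]
      · simp only [Set.mem_setOf_eq]
    have h3 := congrArg (fun z => η * z) h2
    simp only at h3
    linarith
  have hi : ∀ l ∈ Finset.univ, Integrable (fun ω => |G l| *
      {ω | sgn (ghat ω l) ≠ sgn (G l)}.indicator (fun _ => (1:ℝ)) ω) := fun l _ =>
    ((integrable_const (1:ℝ)).indicator (hms l)).const_mul _
  have hi2 := (integrable_finsetSum _ hi).const_mul (2 * η)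
  refine (integral_mono hint ((integrable_const _).add hi2) hpt).trans (le_of_eq ?_)
  simp only [Pi.add_apply]
  rw [integral_add (integrable_const _) hi2, integral_const_mul, integral_finsetSum _ hi]
  simp only [integral_const_mul, integral_indicator_const _ (hms _)]
  simp [Measure.real]
end
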